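/- arXiv:1912.03132 — 8 statements merged into one kernel-verified Lean document; each statement's English description precedes it below -/
import Mathlib

section
/- Let N ≥ 2, δ ∈ (0,1), and let a be a Borel probability measure on [−1,1]^N ⊂ ℝ^N that is balanced, i.e. ∫ q_i da(q) = ∫ q_j da(q) for all i,j. Let û : ℝ^N → ℝ be three times continuously differentiable and suppose: (i) û(x + c𝟙) = û(x) + c for all x ∈ ℝ^N and c ∈ ℝ; (ii) û(x) ≤ max_i x_i + ((1−δ)/(2δ)) ∫ ⟨D²û(x)·q, q⟩ da(q) for all x; (iii) there is E₀ ≥ 0 with û(x) − max_i x_i ≤ E₀ for all x; (iv) there is K ≥ 0 with D³û(y)[q,q,q] ≤ 6K for all y ∈ ℝ^N and all q in the support of a. Then for every x ∈ ℝ^N and every n ∈ ℕ, û(x) − E(n) ≤ g(x,n), where E(n) = (1−δ)^n E₀ + Σ_{τ=1}^n (1−δ)^τ K. -/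
open MeasureTheory Real

/-- The maximum coordinate `max_i x_i`. -/
noncomputable def vecMax {N : ℕ} (x : Fin N → ℝ) : ℝ := ⨆ i, x i

/-- Dynamic-programming value of the finite-horizon geometric-stopping expert game
against the adversary `a`: `g(x,0) = max_i x_i` and
`g(x,n+1) = δ max_i x_i + (1-δ) inf_{p ∈ Δ_N} Σ_i p_i ∫ g(x + q_i 𝟙 - q, n) da(q)`. -/
noncomputable def gVal {N : ℕ} (δ : ℝ) (a : Measure (Fin N → ℝ)) :
    ℕ → (Fin N → ℝ) → ℝ
  | 0 => fun x => vecMax x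
  | n + 1 => fun x =>
      δ * vecMax x + (1 - δ) *
        ⨅ p : stdSimplex ℝ (Fin N),
          ∑ i, (p : Fin N → ℝ) i * ∫ q, gVal δ a n (fun j => x j + q i - q j) ∂a

lemma taylor_dir {N : ℕ} (u : (Fin N → ℝ) → ℝ) (hu : ContDiff ℝ 3 u) (x q : Fin N → ℝ) (K : ℝ)
    (h3 : ∀ y, iteratedFDeriv ℝ 3 u y ![q, q, q] ≤ 6 * K) :
    u x - fderiv ℝ u x q + 1 / 2 * iteratedFDeriv ℝ 2 u x ![q, q] - K ≤ u (x - q) := by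
  set F : ℕ → ℝ → ℝ := fun k t => iteratedFDeriv ℝ k u (x - t • q) (fun _ => q) with hF
  have hder : ∀ k : ℕ, k < 3 → ∀ t, HasDerivAt (F k) (-(F (k + 1) t)) t := by
    intro k hk t
    have hd : DifferentiableAt ℝ (iteratedFDeriv ℝ k u) (x - t • q) :=
      (hu.differentiable_iteratedFDeriv (by exact_mod_cast hk)) _
    have hl : HasDerivAt (fun t : ℝ => x - t • q) (-q) t := by
      simpa using ((hasDerivAt_id t).smul_const q).const_sub x
    have h1 := hd.hasFDerivAt.comp_hasDerivAt t hl
    have h2 := (ContinuousMultilinearMap.apply ℝ (fun _ : Fin k => (Fin N → ℝ)) ℝ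
      (fun _ => q)).hasFDerivAt.comp_hasDerivAt t h1
    refine h2.congr_deriv ?_
    simp only [hF, iteratedFDeriv_succ_apply_left, map_neg]
    rfl
  have hF1 : F 1 0 = fderiv ℝ u x q := by
    simp [hF]
  have hc2 : (fun _ : Fin 2 => q) = ![q, q] := by
    ext i j; fin_cases i <;> rfl
  have hc3 : (fun _ : Fin 3 => q) = ![q, q, q] := by
    ext i j; fin_cases i <;> rfl
  have hF3 : ∀ t, F 3 t ≤ 6 * K := by
    intro t; simp only [hF, hc3]; exact h3 _
  set h : ℝ → ℝ := fun t => F 0 t - (1 - t) * F 1 t + (1 - t) ^ 2 / 2 * F 2 t - K * (1 - t) ^ 3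
    with hh
  have hhd : ∀ t, HasDerivAt h ((1 - t) ^ 2 / 2 * (6 * K - F 3 t)) t := by
    intro t
    have hs : HasDerivAt (fun t : ℝ => 1 - t) (-1) t := by
      simpa using (hasDerivAt_id t).const_sub 1
    have := (((hder 0 (by norm_num) t).sub (hs.mul (hder 1 (by norm_num) t))).add
      (((hs.pow 2).div_const 2).mul (hder 2 (by norm_num) t))).sub ((hs.pow 3).const_mul K)
    refine this.congr_deriv ?_
    simp
    ring
  have hmono : Monotone h := monotone_of_hasDerivAt_nonneg hhd (fun t => by
    have := hF3 t
    have h2 : 0 ≤ (1 - t) ^ 2 / 2 := by positivity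
    exact mul_nonneg h2 (by linarith))
  have h01 := hmono (zero_le_one (α := ℝ))
  have e2 : F 2 0 = iteratedFDeriv ℝ 2 u x ![q, q] := by
    simp [hF, hc2]
  have e0 : F 0 0 = u x := by simp [hF]
  have e1 : F 0 1 = u (x - q) := by simp [hF]
  simp only [hh, hF1, e2, e0, e1] at h01
  norm_num at h01
  linarith

lemma integrable_of_cont {N : ℕ} (a : Measure (Fin N → ℝ)) [IsProbabilityMeasure a]
    (ha_supp : ∀ᵐ q ∂a, ∀ i, q i ∈ Set.Icc (-1 : ℝ) 1) (f : (Fin N → ℝ) → ℝ)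
    (hf : Continuous f) : Integrable f a := by
  have hr : a.restrict (Set.Icc (fun _ => -1) (fun _ => 1)) = a := by
    apply Measure.restrict_eq_self_of_ae_mem
    filter_upwards [ha_supp] with q hq
    exact ⟨fun i => (hq i).1, fun i => (hq i).2⟩
  rw [← hr]
  exact hf.continuousOn.integrableOn_compact isCompact_Icc

lemma bdd_simplex {N : ℕ} (c : Fin N → ℝ) :
    BddBelow (Set.range fun p : stdSimplex ℝ (Fin N) => ∑ i, (p : Fin N → ℝ) i * c i) := by
  refine ⟨-∑ i, |c i|, ?_⟩
  rintro _ ⟨p, rfl⟩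
  rw [← Finset.sum_neg_distrib]
  apply Finset.sum_le_sum
  intro i _
  have h0 : 0 ≤ (p : Fin N → ℝ) i := p.2.1 i
  have h1 : (p : Fin N → ℝ) i ≤ 1 := by
    rw [← p.2.2]
    exact Finset.single_le_sum (fun j _ => p.2.1 j) (Finset.mem_univ i)
  have h2 := neg_abs_le (c i)
  have h3 := abs_nonneg (c i)
  nlinarith

lemma vecMax_le {N : ℕ} [NeZero N] (x y : Fin N → ℝ) : vecMax x ≤ vecMax y + dist x y := by
  refine ciSup_le fun i => ?_
  have h1 : y i ≤ vecMax y := le_ciSup (Set.finite_range y).bddAbove i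
  have h2 := dist_le_pi_dist x y i
  rw [Real.dist_eq] at h2
  have := le_abs_self (x i - y i)
  linarith

lemma gVal_le {N : ℕ} [NeZero N] (δ : ℝ) (hδ : δ ∈ Set.Ioo (0 : ℝ) 1)
    (a : Measure (Fin N → ℝ)) [IsProbabilityMeasure a]
    (ha_supp : ∀ᵐ q ∂a, ∀ i, q i ∈ Set.Icc (-1 : ℝ) 1) (n : ℕ) :
    ∀ x y, gVal δ a n x ≤ gVal δ a n y + dist x y := by
  induction n with
  | zero => exact vecMax_le
  | succ n ih =>
    have hcont : Continuous (gVal δ a n) := (LipschitzWith.of_le_add ih).continuous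
    have hint : ∀ (x : Fin N → ℝ) (i : Fin N),
        Integrable (fun q : Fin N → ℝ => gVal δ a n (fun j => x j + q i - q j)) a := fun x i =>
      integrable_of_cont a ha_supp _ (hcont.comp (by fun_prop))
    intro x y
    have hne : Nonempty (stdSimplex ℝ (Fin N)) := inferInstance
    have key : (⨅ p : stdSimplex ℝ (Fin N),
          ∑ i, (p : Fin N → ℝ) i * ∫ q, gVal δ a n (fun j => x j + q i - q j) ∂a)
        ≤ (⨅ p : stdSimplex ℝ (Fin N),
          ∑ i, (p : Fin N → ℝ) i * ∫ q, gVal δ a n (fun j => y j + q i - q j) ∂a)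
          + dist x y := by
      rw [← sub_le_iff_le_add]
      refine le_ciInf fun p => ?_
      rw [sub_le_iff_le_add]
      refine (ciInf_le (bdd_simplex _) p).trans ?_
      have hd : dist x y = ∑ i, (p : Fin N → ℝ) i * dist x y := by
        rw [← Finset.sum_mul, show ∑ i, (p : Fin N → ℝ) i = 1 from p.2.2, one_mul]
      rw [hd, ← Finset.sum_add_distrib]
      apply Finset.sum_le_sum
      intro i _
      rw [← mul_add]
      refine mul_le_mul_of_nonneg_left ?_ (p.2.1 i)
      have : ∫ q, (gVal δ a n (fun j => y j + q i - q j) + dist x y) ∂a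
          = ∫ q, gVal δ a n (fun j => y j + q i - q j) ∂a + dist x y := by
        rw [integral_add (hint y i) (integrable_const _)]; simp
      rw [← this]
      refine integral_mono (hint x i) ((hint y i).add (integrable_const _)) fun q => ?_
      refine (ih _ (fun j => y j + q i - q j)).trans ?_
      have : dist (fun j => x j + q i - q j) (fun j => y j + q i - q j) ≤ dist x y := by
        refine (dist_pi_le_iff dist_nonneg).2 fun j => ?_
        have := dist_le_pi_dist x y j
        rw [Real.dist_eq] at this ⊢
        convert this using 2
        ring
      simpa using this
    have hv := vecMax_le x y
    obtain ⟨h0, h1⟩ := hδ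
    simp only [gVal]
    have e1 := mul_le_mul_of_nonneg_left hv h0.le
    have e2 := mul_le_mul_of_nonneg_left key (sub_nonneg.2 h1.le)
    linarith

theorem geometric_horizon_lower_bound
    {N : ℕ} (hN : 2 ≤ N) (δ : ℝ) (hδ : δ ∈ Set.Ioo (0 : ℝ) 1)
    (a : Measure (Fin N → ℝ)) [IsProbabilityMeasure a]
    (ha_supp : ∀ᵐ q ∂a, ∀ i, q i ∈ Set.Icc (-1 : ℝ) 1)
    (ha_bal : ∀ i j : Fin N, ∫ q, q i ∂a = ∫ q, q j ∂a)
    (uhat : (Fin N → ℝ) → ℝ) (hu : ContDiff ℝ 3 uhat)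
    (hlin : ∀ (x : Fin N → ℝ) (c : ℝ), uhat (fun j => x j + c) = uhat x + c)
    (hsub : ∀ x, uhat x ≤ vecMax x +
      (1 - δ) / (2 * δ) * ∫ q, iteratedFDeriv ℝ 2 uhat x ![q, q] ∂a)
    (E₀ : ℝ) (hE₀ : 0 ≤ E₀) (hbound : ∀ x, uhat x - vecMax x ≤ E₀)
    (K : ℝ) (hK : 0 ≤ K)
    (hD3 : ∀ᵐ q ∂a, ∀ y, iteratedFDeriv ℝ 3 uhat y ![q, q, q] ≤ 6 * K) :
    ∀ (x : Fin N → ℝ) (n : ℕ),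
      uhat x - ((1 - δ) ^ n * E₀ + ∑ τ ∈ Finset.Icc 1 n, (1 - δ) ^ τ * K)
        ≤ gVal δ a n x := by
  have : NeZero N := ⟨by omega⟩
  have hdiff : Differentiable ℝ uhat := hu.differentiable (by norm_num)
  have hcu : Continuous uhat := hu.continuous
  obtain ⟨h0, h1⟩ := id hδ
  set m : ℝ := ∫ q, q 0 ∂a with hm
  have hbal : ∀ i, ∫ q, q i ∂a = m := fun i => ha_bal i 0
  have hI : ∀ f : (Fin N → ℝ) → ℝ, Continuous f → Integrable f a :=
    integrable_of_cont a ha_supp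
  -- derivative in the direction of the all-ones vector
  have hone : ∀ x, fderiv ℝ uhat x (fun _ => 1) = 1 := by
    intro x
    have hl : HasDerivAt (fun t : ℝ => x + t • (fun _ => 1 : Fin N → ℝ)) (fun _ => 1) 0 := by
      simpa using ((hasDerivAt_id (0 : ℝ)).smul_const (fun _ => 1 : Fin N → ℝ)).const_add x
    have hx : HasFDerivAt uhat (fderiv ℝ uhat x) (x + (0 : ℝ) • (fun _ => 1 : Fin N → ℝ)) := by
      simpa using (hdiff x).hasFDerivAt
    have h2 := hx.comp_hasDerivAt (0 : ℝ) hl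
    have h3 : HasDerivAt (fun t : ℝ => uhat x + t) 1 0 := by
      simpa using (hasDerivAt_id (0 : ℝ)).const_add (uhat x)
    have h4 : (uhat ∘ fun t : ℝ => x + t • (fun _ => 1 : Fin N → ℝ)) = fun t => uhat x + t := by
      funext t
      rw [← hlin x t]
      simp only [Function.comp]
      congr 1
      funext j
      simp
    rw [h4] at h2
    exact h2.unique h3
  have hfd : ∀ x, ∫ q, fderiv ℝ uhat x q ∂a = m := by
    intro x
    have hid : Integrable (fun q : Fin N → ℝ => q) a :=
      Integrable.of_eval fun i => hI _ (continuous_apply i)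
    rw [ContinuousLinearMap.integral_comp_comm _ hid]
    have : ∫ q, q ∂a = m • (fun _ => 1 : Fin N → ℝ) := by
      funext i
      rw [eval_integral (fun i => hI _ (continuous_apply i)), hbal]
      simp
    rw [this, map_smul, hone]
    simp
  have hstep : ∀ x, uhat x - m + 1 / 2 * ∫ q, iteratedFDeriv ℝ 2 uhat x ![q, q] ∂a - K
      ≤ ∫ q, uhat (x - q) ∂a := by
    intro x
    have i1 : Integrable (fun q => fderiv ℝ uhat x q) a := hI _ (fderiv ℝ uhat x).continuous
    have i2 : Integrable (fun q => iteratedFDeriv ℝ 2 uhat x ![q, q]) a :=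
      hI _ ((iteratedFDeriv ℝ 2 uhat x).cont.comp
        (continuous_pi fun i => by fin_cases i <;> exact continuous_id))
    have i3 : Integrable (fun q => uhat (x - q)) a := hI _ (hcu.comp (by fun_prop))
    have j1 : Integrable (fun q => uhat x - fderiv ℝ uhat x q) a := (integrable_const _).sub i1
    have j2 : Integrable (fun q => 1 / 2 * iteratedFDeriv ℝ 2 uhat x ![q, q]) a := i2.const_mul _
    have j3 : Integrable (fun q => uhat x - fderiv ℝ uhat x q
      + 1 / 2 * iteratedFDeriv ℝ 2 uhat x ![q, q]) a := j1.add j2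
    have e : ∫ q, (uhat x - fderiv ℝ uhat x q
        + 1 / 2 * iteratedFDeriv ℝ 2 uhat x ![q, q] - K) ∂a
        = uhat x - m + 1 / 2 * ∫ q, iteratedFDeriv ℝ 2 uhat x ![q, q] ∂a - K := by
      rw [integral_sub j3 (integrable_const _), integral_add j1 j2,
        integral_sub (integrable_const _) i1, hfd, integral_const_mul]
      simp
    rw [← e]
    refine integral_mono_ae (j3.sub (integrable_const _)) i3 ?_
    filter_upwards [hD3] with q hq
    exact taylor_dir uhat hu x q K hq
  intro x n
  induction n generalizing x with
  | zero =>
    have := hbound x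
    simp [gVal]
    linarith
  | succ n ih =>
    set E : ℝ := (1 - δ) ^ n * E₀ + ∑ τ ∈ Finset.Icc 1 n, (1 - δ) ^ τ * K with hE
    have hcont : Continuous (gVal δ a n) :=
      (LipschitzWith.of_le_add (gVal_le δ hδ a ha_supp n)).continuous
    have hErec : (1 - δ) ^ (n + 1) * E₀ + ∑ τ ∈ Finset.Icc 1 (n + 1), (1 - δ) ^ τ * K
        = (1 - δ) * (E + K) := by
      rw [hE]
      have : ∀ n : ℕ, ∑ τ ∈ Finset.Icc 1 (n + 1), (1 - δ) ^ τ * K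
          = (1 - δ) * (∑ τ ∈ Finset.Icc 1 n, (1 - δ) ^ τ * K + K) := by
        intro n
        induction n with
        | zero => simp
        | succ n ihn =>
          have e := Finset.sum_Icc_succ_top (show 1 ≤ n + 1 by omega) (fun τ => (1 - δ) ^ τ * K)
          rw [Finset.sum_Icc_succ_top (by omega)]
          linear_combination ihn - (1 - δ) * e
      rw [this]
      ring
    have hne : Nonempty (stdSimplex ℝ (Fin N)) := inferInstance
    have key : uhat x + 1 / 2 * ∫ q, iteratedFDeriv ℝ 2 uhat x ![q, q] ∂a - K - E ≤
        ⨅ p : stdSimplex ℝ (Fin N),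
          ∑ i, (p : Fin N → ℝ) i * ∫ q, gVal δ a n (fun j => x j + q i - q j) ∂a := by
      refine le_ciInf fun p => ?_
      have hs := hstep x
      set C := uhat x + 1 / 2 * ∫ q, iteratedFDeriv ℝ 2 uhat x ![q, q] ∂a - K - E with hC
      have hCs : C = ∑ i, (p : Fin N → ℝ) i * C := by
        rw [← Finset.sum_mul, show ∑ i, (p : Fin N → ℝ) i = 1 from p.2.2, one_mul]
      rw [hCs]
      apply Finset.sum_le_sum
      intro i _
      refine mul_le_mul_of_nonneg_left ?_ (p.2.1 i)
      have i3 : Integrable (fun q => uhat (x - q)) a := hI _ (hcu.comp (by fun_prop))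
      have i4 : Integrable (fun q : Fin N → ℝ => q i) a := hI _ (continuous_apply i)
      have i5 : Integrable (fun q => uhat (x - q) + q i) a := i3.add i4
      have e : ∫ q, (uhat (x - q) + q i - E) ∂a = ∫ q, uhat (x - q) ∂a + m - E := by
        rw [integral_sub i5 (integrable_const _), integral_add i3 i4, hbal]
        simp
      have hle : ∫ q, (uhat (x - q) + q i - E) ∂a
          ≤ ∫ q, gVal δ a n (fun j => x j + q i - q j) ∂a := by
        refine integral_mono (i5.sub (integrable_const _))
          (hI _ (hcont.comp (by fun_prop))) fun q => ?_
        have h := ih (fun j => x j + q i - q j)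
        have h' := hlin (x - q) (q i)
        have h'' : (fun j => (x - q) j + q i) = fun j => x j + q i - q j := by
          funext j; simp; ring
        rw [h''] at h'
        rw [h'] at h
        exact h
      rw [e] at hle
      linarith
    rw [hErec]
    simp only [gVal]
    have hs := mul_le_mul_of_nonneg_left (hsub x) h0.le
    have hs2 : δ * (vecMax x + (1 - δ) / (2 * δ) * ∫ q, iteratedFDeriv ℝ 2 uhat x ![q, q] ∂a)
        = δ * vecMax x + (1 - δ) * (1 / 2 * ∫ q, iteratedFDeriv ℝ 2 uhat x ![q, q] ∂a) := by
      field_simp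
    rw [hs2] at hs
    have hk := mul_le_mul_of_nonneg_left key (sub_nonneg.2 h1.le)
    linarith
end

section
/- Let N ≥ 2, δ ∈ (0,1), set c = (1−δ)/(2δ), and let a be a Borel probability measure on [−1,1]^N. Let u : ℝ^N × (−∞,0] → ℝ be twice continuously differentiable in x and continuously differentiable in t on ℝ^N × (−∞,0), and suppose: (i) u(x + c'𝟙, t) = u(x,t) + c' for all x, t < 0, c' ∈ ℝ; (ii) ∂_t u(x,t) + c ∫ ⟨D²u(x,t)·q, q⟩ da(q) ≥ 0 for all x and t < 0; (iii) there is a constant C with u(x,−δ) − max_i x_i ≤ C for all x; (iv) for each x the functions t ↦ e^t u(x,t) and t ↦ e^t ∂_t u(x,t) are integrable on (−∞,−δ), lim_{t→−∞} e^t u(x,t) = 0, and the function û(x) := e^δ ∫_{−∞}^{−δ} e^t u(x,t) dt − C is twice continuously differentiable with D²û(x) = e^δ ∫_{−∞}^{−δ} e^t D²u(x,t) dt; (v) (q,t) ↦ e^t ⟨D²u(x,t)·q, q⟩ is integrable with respect to a ⊗ Lebesgue on [−1,1]^N × (−∞,−δ) for each x. Then û satisfies û(x + c'𝟙) = û(x)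 + c' for all x, c', and û(x) ≤ max_i x_i + c ∫ ⟨D²û(x)·q, q⟩ da(q) for all x ∈ ℝ^N. -/
open MeasureTheory Real

theorem fixed_horizon_to_geometric_lower_bound
    {N : ℕ} (hN : 2 ≤ N) (δ : ℝ) (hδ : δ ∈ Set.Ioo (0 : ℝ) 1)
    (c : ℝ) (hc : c = (1 - δ) / (2 * δ))
    (a : Measure (Fin N → ℝ)) [IsProbabilityMeasure a]
    (ha_supp : ∀ᵐ q ∂a, ∀ i, q i ∈ Set.Icc (-1 : ℝ) 1)
    (u : (Fin N → ℝ) → ℝ → ℝ)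
    (hux : ∀ t : ℝ, t < 0 → ContDiff ℝ 2 (fun y => u y t))
    (hut : ∀ x : Fin N → ℝ, ContDiffOn ℝ 1 (u x) (Set.Iio 0))
    -- (i) linearity in the direction of the all-ones vector
    (hlin : ∀ (x : Fin N → ℝ) (t : ℝ), t < 0 → ∀ c' : ℝ,
      u (fun j => x j + c') t = u x t + c')
    -- (ii) the parabolic inequality u_t + c ∫ ⟨D²u·q,q⟩ da(q) ≥ 0
    (hpde : ∀ (x : Fin N → ℝ) (t : ℝ), t < 0 →
      0 ≤ deriv (u x) t + c * ∫ q, iteratedFDeriv ℝ 2 (fun y => u y t) x ![q, q] ∂a)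
    -- (iii) final-time bound
    (C : ℝ) (hC : ∀ x : Fin N → ℝ, u x (-δ) - vecMax x ≤ C)
    -- (iv) integrability, vanishing at -∞, and regularity of the transform
    (hint : ∀ x : Fin N → ℝ, IntegrableOn (fun t => Real.exp t * u x t) (Set.Iio (-δ)))
    (hint' : ∀ x : Fin N → ℝ,
      IntegrableOn (fun t => Real.exp t * deriv (u x) t) (Set.Iio (-δ)))
    (hlim : ∀ x : Fin N → ℝ,
      Filter.Tendsto (fun t => Real.exp t * u x t) Filter.atBot (nhds 0))
    (uhat : (Fin N → ℝ) → ℝ)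
    (huhat : ∀ x, uhat x = Real.exp δ * (∫ t in Set.Iio (-δ), Real.exp t * u x t) - C)
    (huhat_smooth : ContDiff ℝ 2 uhat)
    (huhat_hess : ∀ (x q : Fin N → ℝ),
      iteratedFDeriv ℝ 2 uhat x ![q, q] =
        Real.exp δ * ∫ t in Set.Iio (-δ),
          Real.exp t * iteratedFDeriv ℝ 2 (fun y => u y t) x ![q, q])
    -- (v) joint integrability of the Hessian quadratic form
    (hprod : ∀ x : Fin N → ℝ,
      Integrable (fun p : (Fin N → ℝ) × ℝ =>
          Real.exp p.2 * iteratedFDeriv ℝ 2 (fun y => u y p.2) x ![p.1, p.1])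
        (a.prod (volume.restrict (Set.Iio (-δ))))) :
    (∀ (x : Fin N → ℝ) (c' : ℝ), uhat (fun j => x j + c') = uhat x + c') ∧
      ∀ x : Fin N → ℝ,
        uhat x ≤ vecMax x + c * ∫ q, iteratedFDeriv ℝ 2 uhat x ![q, q] ∂a := by
  obtain ⟨hδ0, hδ1⟩ := hδ
  have hee : Real.exp δ * Real.exp (-δ) = 1 := by
    rw [← Real.exp_add]; simp
  refine ⟨?_, ?_⟩
  · intro x c'
    have h1 : ∫ t in Set.Iio (-δ), Real.exp t * u (fun j => x j + c') t
        = ∫ t in Set.Iio (-δ), (Real.exp t * u x t + Real.exp t * c') := by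
      apply setIntegral_congr_fun measurableSet_Iio
      intro t ht
      have ht' : t < 0 := lt_trans (Set.mem_Iio.1 ht) (by linarith)
      simp only [hlin x t ht' c']
      ring
    have hexp : IntegrableOn (fun t => Real.exp t) (Set.Iio (-δ)) :=
      (integrableOn_exp_Iic (-δ)).mono_set Set.Iio_subset_Iic_self
    have hexpv : ∫ t in Set.Iio (-δ), Real.exp t = Real.exp (-δ) := by
      rw [← integral_Iic_eq_integral_Iio, integral_exp_Iic]
    rw [huhat, huhat, h1, integral_add (hint x) (hexp.mul_const c'), integral_mul_const, hexpv]
    linear_combination c' * hee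
  · intro x
    have hd : ∀ t ∈ Set.Iio (0 : ℝ), HasDerivAt (u x) (deriv (u x) t) t := fun t ht =>
      (((hut x).differentiableOn (by norm_num)).differentiableAt
        (isOpen_Iio.mem_nhds ht)).hasDerivAt
    have hd2 : ∀ t ∈ Set.Iio (0 : ℝ), HasDerivAt (fun t => Real.exp t * u x t)
        (Real.exp t * u x t + Real.exp t * deriv (u x) t) t := fun t ht =>
      (Real.hasDerivAt_exp t).mul (hd t ht)
    have hlt : (-δ) ∈ Set.Iio (0 : ℝ) := by simpa using hδ0
    have hI : ∫ t in Set.Iic (-δ), (Real.exp t * u x t + Real.exp t * deriv (u x) t)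
        = Real.exp (-δ) * u x (-δ) - 0 := by
      refine integral_Iic_of_hasDerivAt_of_tendsto
        (hd2 _ hlt).continuousAt.continuousWithinAt
        (fun t ht => hd2 t (lt_trans (Set.mem_Iio.1 ht) hlt)) ?_ (hlim x)
      rw [integrableOn_Iic_iff_integrableOn_Iio]
      exact (hint x).add (hint' x)
    rw [integral_Iic_eq_integral_Iio, integral_add (hint x) (hint' x)] at hI
    have hswap := integral_integral_swap (μ := a) (ν := volume.restrict (Set.Iio (-δ)))
      (f := fun q t => Real.exp t * iteratedFDeriv ℝ 2 (fun y => u y t) x ![q, q]) (hprod x)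
    have hint2 : IntegrableOn (fun t => ∫ q, Real.exp t *
        iteratedFDeriv ℝ 2 (fun y => u y t) x ![q, q] ∂a) (Set.Iio (-δ)) :=
      (hprod x).integral_prod_right
    have hnn : 0 ≤ ∫ t in Set.Iio (-δ), (Real.exp t * deriv (u x) t + c * ∫ q, Real.exp t *
        iteratedFDeriv ℝ 2 (fun y => u y t) x ![q, q] ∂a) := by
      apply setIntegral_nonneg measurableSet_Iio
      intro t ht
      have := mul_nonneg (Real.exp_pos t).le
        (hpde x t (lt_trans (Set.mem_Iio.1 ht) hlt))
      rw [integral_const_mul]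
      linarith
    rw [integral_add (hint' x) (hint2.const_mul c), integral_const_mul, ← hswap] at hnn
    simp_rw [huhat_hess]
    rw [integral_const_mul, huhat]
    have h3 := mul_nonneg (Real.exp_pos δ).le hnn
    have h4 : Real.exp δ * (∫ t in Set.Iio (-δ), Real.exp t * u x t)
        + Real.exp δ * (∫ t in Set.Iio (-δ), Real.exp t * deriv (u x) t) = u x (-δ) := by
      linear_combination Real.exp δ * hI + u x (-δ) * hee
    have h5 := hC x
    linarith
end

section
/- Let N ≥ 2, δ ∈ (0,1). Let ŵ : ℝ^N → ℝ be three times continuously differentiable and suppose: (i) ŵ(x + c𝟙) = ŵ(x) + c for all x ∈ ℝ^N and c ∈ ℝ; (ii) ŵ is nondecreasing in each coordinate; (iii) ŵ(x) ≥ max_i x_i + ((1−δ)/(2δ)) sup_{q ∈ [−1,1]^N} ⟨D²ŵ(x)·q, q⟩ for all x; (iv) there is E₀ ≥ 0 with max_i x_i − ŵ(x) ≤ E₀ for all x; (v) there is K ≥ 0 with −D³ŵ(y)[q,q,q] ≤ 6K for all y ∈ ℝ^N and all q ∈ [−1,1]^N. Then for every x ∈ ℝ^N and every n ∈ ℕ,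 h(x,n) ≤ ŵ(x) + E(n), where E(n) = (1−δ)^n E₀ + Σ_{τ=1}^n (1−δ)^τ K and h is the dynamic-programming value of the game against the player p(x) = ∇ŵ(x). -/
open MeasureTheory Real

/-- Dynamic-programming value of the finite-horizon geometric-stopping expert game
for the player `p(x) = ∇w(x)` against a worst-case adversary:
`h(x,0) = max_i x_i` and
`h(x,n+1) = δ max_i x_i + (1-δ) sup_{q ∈ [-1,1]^N} Σ_i ∂_i w(x) · h(x + q_i 𝟙 - q, n)`. -/
noncomputable def hVal {N : ℕ} (δ : ℝ) (w : (Fin N → ℝ) → ℝ) :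
    ℕ → (Fin N → ℝ) → ℝ
  | 0 => fun x => vecMax x
  | n + 1 => fun x =>
      δ * vecMax x + (1 - δ) *
        ⨆ q : (Set.Icc (-1 : Fin N → ℝ) 1),
          ∑ i, fderiv ℝ w x (Pi.single i 1) *
            hVal δ w n (fun j => x j + (q : Fin N → ℝ) i - (q : Fin N → ℝ) j)


theorem aux_hasDeriv {N : ℕ} (w : (Fin N → ℝ) → ℝ) (hw : ContDiff ℝ 3 w)
    (x v : Fin N → ℝ) (k : ℕ) (hk : k < 3) (t : ℝ) :
    HasDerivAt (fun s : ℝ => iteratedFDeriv ℝ k w (x + s • v) (fun _ => v))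
      (iteratedFDeriv ℝ (k + 1) w (x + t • v) (fun _ => v)) t := by
  have hd : DifferentiableAt ℝ (iteratedFDeriv ℝ k w) (x + t • v) :=
    (hw.differentiable_iteratedFDeriv (by exact_mod_cast hk)) _
  have hl : HasDerivAt (fun s : ℝ => x + s • v) v t := by
    simpa using ((hasDerivAt_id t).smul_const v).const_add x
  have h1 := hd.hasFDerivAt.comp_hasDerivAt t hl
  have h2 := (ContinuousMultilinearMap.apply ℝ (fun _ : Fin k => (Fin N → ℝ)) ℝ
    (fun _ => v)).hasFDerivAt.comp_hasDerivAt t h1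
  exact h2

theorem aux_taylor {N : ℕ} (w : (Fin N → ℝ) → ℝ) (hw : ContDiff ℝ 3 w)
    (x v : Fin N → ℝ) (K : ℝ)
    (hK : ∀ y, iteratedFDeriv ℝ 3 w y (fun _ => v) ≤ 6 * K) :
    w (x + v) ≤ w x + fderiv ℝ w x v
      + 1 / 2 * iteratedFDeriv ℝ 2 w x (fun _ => v) + K := by
  have h0 : ∀ t : ℝ, HasDerivAt (fun s : ℝ => iteratedFDeriv ℝ 0 w (x + s • v) (fun _ => v))
      (iteratedFDeriv ℝ 1 w (x + t • v) (fun _ => v)) t :=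
    aux_hasDeriv w hw x v 0 (by norm_num)
  have h1 := aux_hasDeriv w hw x v 1 (by norm_num)
  have h2 := aux_hasDeriv w hw x v 2 (by norm_num)
  let F : ℝ → ℝ := fun t =>
    iteratedFDeriv ℝ 0 w (x + t • v) (fun _ => v)
    + (1 - t) * iteratedFDeriv ℝ 1 w (x + t • v) (fun _ => v)
    + (1 - t) ^ 2 / 2 * iteratedFDeriv ℝ 2 w (x + t • v) (fun _ => v)
    + K * (1 - t) ^ 3
  have hl : ∀ t : ℝ, HasDerivAt (fun s : ℝ => 1 - s) (-1) t := fun t => by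
    simpa using (hasDerivAt_id t).const_sub 1
  have hF : ∀ t, HasDerivAt F
      ((1 - t) ^ 2 / 2 * (iteratedFDeriv ℝ 3 w (x + t • v) (fun _ => v) - 6 * K)) t := by
    intro t
    have := (((h0 t).add ((hl t).mul (h1 t))).add
      ((((hl t).pow 2).div_const 2).mul (h2 t))).add (((hl t).pow 3).const_mul K)
    refine this.congr_deriv ?_
    norm_num
    ring
  have hanti : Antitone F := by
    apply antitone_of_hasDerivAt_nonpos hF
    intro t
    exact mul_nonpos_of_nonneg_of_nonpos (by positivity) (by linarith [hK (x + t • v)])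
  have := hanti (zero_le_one' ℝ)
  simp only [F, zero_smul, one_smul, add_zero, iteratedFDeriv_zero_apply,
    iteratedFDeriv_one_apply] at this
  norm_num at this
  linarith

theorem aux_bdd {N : ℕ} (w : (Fin N → ℝ) → ℝ) (x : Fin N → ℝ) :
    BddAbove (Set.range fun q : (Set.Icc (-1 : Fin N → ℝ) 1) =>
      iteratedFDeriv ℝ 2 w x ![(q : Fin N → ℝ), (q : Fin N → ℝ)]) := by
  have : CompactSpace (Set.Icc (-1 : Fin N → ℝ) 1) :=
    isCompact_iff_compactSpace.mp isCompact_Icc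
  apply IsCompact.bddAbove
  apply isCompact_range
  refine (iteratedFDeriv ℝ 2 w x).cont.comp ?_
  refine continuous_pi fun i => ?_
  fin_cases i <;> exact continuous_subtype_val

theorem geometric_horizon_upper_bound
    {N : ℕ} (hN : 2 ≤ N) (δ : ℝ) (hδ : δ ∈ Set.Ioo (0 : ℝ) 1)
    (what : (Fin N → ℝ) → ℝ) (hw : ContDiff ℝ 3 what)
    -- (i) linearity in the direction of the all-ones vector
    (hlin : ∀ (x : Fin N → ℝ) (c : ℝ), what (fun j => x j + c) = what x + c)
    -- (ii) nondecreasing in each coordinate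
    (hmono : Monotone what)
    -- (iii) the supersolution inequality
    (hsuper : ∀ x, what x ≥ vecMax x +
      (1 - δ) / (2 * δ) *
        ⨆ q : (Set.Icc (-1 : Fin N → ℝ) 1),
          iteratedFDeriv ℝ 2 what x ![(q : Fin N → ℝ), (q : Fin N → ℝ)])
    -- (iv) uniform lower bound at infinity
    (E₀ : ℝ) (hE₀ : 0 ≤ E₀) (hbound : ∀ x, vecMax x - what x ≤ E₀)
    -- (v) third-derivative bound
    (K : ℝ) (hK : 0 ≤ K)
    (hD3 : ∀ (y : Fin N → ℝ), ∀ q ∈ Set.Icc (-1 : Fin N → ℝ) 1,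
      -iteratedFDeriv ℝ 3 what y ![q, q, q] ≤ 6 * K) :
    ∀ (x : Fin N → ℝ) (n : ℕ),
      hVal δ what n x ≤
        what x + ((1 - δ) ^ n * E₀ + ∑ τ ∈ Finset.Icc 1 n, (1 - δ) ^ τ * K) := by
  obtain ⟨hδ0, hδ1⟩ := hδ
  have hdiff : Differentiable ℝ what := hw.differentiable (by norm_num)
  -- gradient is nonnegative
  have hp : ∀ x i, 0 ≤ fderiv ℝ what x (Pi.single i 1) := by
    intro x i
    have hl : HasDerivAt (fun s : ℝ => x + s • (Pi.single i 1 : Fin N → ℝ)) (Pi.single i 1) 0 := by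
      simpa using ((hasDerivAt_id (0 : ℝ)).smul_const (Pi.single i 1 : Fin N → ℝ)).const_add x
    have hc : HasDerivAt (fun s : ℝ => what (x + s • (Pi.single i 1 : Fin N → ℝ)))
        (fderiv ℝ what x (Pi.single i 1)) 0 := by
      have hf : HasFDerivAt what (fderiv ℝ what x)
          (x + (0 : ℝ) • (Pi.single i 1 : Fin N → ℝ)) := by
        simpa using (hdiff x).hasFDerivAt
      exact hf.comp_hasDerivAt 0 hl
    rw [← hc.deriv]
    apply Monotone.deriv_nonneg
    intro a b hab
    apply hmono
    have : (0 : Fin N → ℝ) ≤ Pi.single i 1 := by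
      simp [Pi.single_nonneg]
    gcongr
  have hone : ∀ x, ∑ i, fderiv ℝ what x (Pi.single i 1) = 1 := by
    intro x
    have hl : HasDerivAt (fun s : ℝ => x + s • (1 : Fin N → ℝ)) 1 0 := by
      simpa using ((hasDerivAt_id (0 : ℝ)).smul_const (1 : Fin N → ℝ)).const_add x
    have hf : HasFDerivAt what (fderiv ℝ what x) (x + (0 : ℝ) • (1 : Fin N → ℝ)) := by
      simpa using (hdiff x).hasFDerivAt
    have hc := hf.comp_hasDerivAt 0 hl
    have hc2 : HasDerivAt (what ∘ fun s : ℝ => x + s • (1 : Fin N → ℝ)) 1 0 := by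
      have : (what ∘ fun s : ℝ => x + s • (1 : Fin N → ℝ)) = fun s => what x + s := by
        funext s
        rw [← hlin x s]
        simp only [Function.comp]
        congr 1
        funext j
        simp
      rw [this]
      simpa using (hasDerivAt_id (0 : ℝ)).const_add (what x)
    have he : ∑ i, (Pi.single i 1 : Fin N → ℝ) = 1 := Finset.univ_sum_single (1 : Fin N → ℝ)
    rw [← map_sum, he]
    exact hc.unique hc2
  have hsum : ∀ x q : Fin N → ℝ, ∑ i, fderiv ℝ what x (Pi.single i 1) * q i
      = fderiv ℝ what x q := by
    intro x q
    conv_rhs => rw [← Finset.univ_sum_single q, map_sum]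
    refine Finset.sum_congr rfl fun i _ => ?_
    have : (Pi.single i (q i) : Fin N → ℝ) = q i • Pi.single i 1 := by
      rw [← Pi.single_smul]; simp
    rw [this, map_smul, smul_eq_mul, mul_comm]
  intro x n
  induction n generalizing x with
  | zero =>
    have := hbound x
    simp only [hVal]
    simp
    linarith
  | succ n ih =>
    set E := (1 - δ) ^ n * E₀ + ∑ τ ∈ Finset.Icc 1 n, (1 - δ) ^ τ * K with hE
    have hEs : (1 - δ) ^ (n + 1) * E₀ + ∑ τ ∈ Finset.Icc 1 (n + 1), (1 - δ) ^ τ * K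
        = (1 - δ) * (E + K) := by
      have : ∀ m : ℕ, ∑ τ ∈ Finset.Icc 1 (m + 1), (1 - δ) ^ τ * K
          = (1 - δ) * (∑ τ ∈ Finset.Icc 1 m, (1 - δ) ^ τ * K + K) := by
        intro m
        induction m with
        | zero => simp
        | succ m ihm =>
          have b := Finset.sum_Icc_succ_top (a := 1) (b := m) (by omega)
            (fun τ => (1 - δ) ^ τ * K)
          rw [Finset.sum_Icc_succ_top (by omega)]
          linear_combination ihm - (1 - δ) * b
      rw [this, hE]
      ring
    rw [hEs]
    simp only [hVal]
    set S := ⨆ q : (Set.Icc (-1 : Fin N → ℝ) 1),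
          iteratedFDeriv ℝ 2 what x ![(q : Fin N → ℝ), (q : Fin N → ℝ)] with hS
    have : Nonempty (Set.Icc (-1 : Fin N → ℝ) 1) :=
      ⟨⟨0, by constructor <;> intro i <;> simp⟩⟩
    have hsup : (⨆ q : (Set.Icc (-1 : Fin N → ℝ) 1),
          ∑ i, fderiv ℝ what x (Pi.single i 1) *
            hVal δ what n (fun j => x j + (q : Fin N → ℝ) i - (q : Fin N → ℝ) j))
        ≤ what x + 1 / 2 * S + K + E := by
      apply ciSup_le
      rintro ⟨q, hq⟩
      have hstep : ∀ i, hVal δ what n (fun j => x j + q i - q j)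
          ≤ what (x + -q) + q i + E := by
        intro i
        refine (ih _).trans_eq ?_
        rw [← hlin (x + -q) (q i)]
        congr 2
        funext j
        simp
        ring
      have hneg : ∀ (k : ℕ) (y : Fin N → ℝ), iteratedFDeriv ℝ k what y (fun _ => -q)
          = (-1) ^ k * iteratedFDeriv ℝ k what y (fun _ => q) := by
        intro k y
        have := (iteratedFDeriv ℝ k what y).map_smul_univ (fun _ => (-1 : ℝ)) (fun _ => q)
        simpa using this
      have e3 : (![q, q, q] : Fin 3 → Fin N → ℝ) = fun _ => q := by
        funext i; fin_cases i <;> rfl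
      have e2 : (![q, q] : Fin 2 → Fin N → ℝ) = fun _ => q := by
        funext i; fin_cases i <;> rfl
      have hT := aux_taylor what hw x (-q) K (by
        intro y
        rw [hneg]
        have := hD3 y q hq
        rw [e3] at this
        linarith)
      rw [hneg, map_neg] at hT
      have hb := le_ciSup (aux_bdd what x) ⟨q, hq⟩
      simp only [e2] at hb
      rw [← hS] at hb
      calc ∑ i, fderiv ℝ what x (Pi.single i 1) * hVal δ what n (fun j => x j + q i - q j)
          ≤ ∑ i, fderiv ℝ what x (Pi.single i 1) * (what (x + -q) + q i + E) :=
            Finset.sum_le_sum fun i _ => mul_le_mul_of_nonneg_left (hstep i) (hp x i)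
        _ = (∑ i, fderiv ℝ what x (Pi.single i 1)) * (what (x + -q) + E)
            + ∑ i, fderiv ℝ what x (Pi.single i 1) * q i := by
            rw [Finset.sum_mul, ← Finset.sum_add_distrib]
            exact Finset.sum_congr rfl fun i _ => by ring
        _ = what (x + -q) + E + fderiv ℝ what x q := by rw [hone, hsum]; ring
        _ ≤ _ := by linarith
    have h1 := mul_le_mul_of_nonneg_left hsup (by linarith : (0 : ℝ) ≤ 1 - δ)
    have h2 := hsuper x
    rw [← hS] at h2
    have h3 : δ * vecMax x + (1 - δ) / 2 * S ≤ δ * what x := by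
      have := mul_le_mul_of_nonneg_left h2 hδ0.le
      have e : δ * (vecMax x + (1 - δ) / (2 * δ) * S) = δ * vecMax x + (1 - δ) / 2 * S := by
        field_simp
      linarith
    linarith
end

section
/- Let N ≥ 2, δ ∈ (0,1), set c = (1−δ)/(2δ). Let w : ℝ^N × (−∞,0] → ℝ be twice continuously differentiable in x and continuously differentiable in t on ℝ^N × (−∞,0), and suppose: (i) w(x + c'𝟙, t) = w(x,t) + c' for all x, t < 0, c' ∈ ℝ; (ii) w(·,t) is nondecreasing in each coordinate for each t < 0; (iii) ∂_t w(x,t) + c · sup_{q ∈ [−1,1]^N} ⟨D²w(x,t)·q, q⟩ ≤ 0 for all x and t < 0; (iv) there is a constant C with max_i x_i − w(x,−δ) ≤ C for all x; (v) for each x the functions t ↦ e^t w(x,t), t ↦ e^t ∂_t w(x,t), and t ↦ e^t sup_{q ∈ [−1,1]^N} ⟨D²w(x,t)·q,q⟩ are integrable on (−∞,−δ), lim_{t→−∞} e^t w(x,t) = 0, and ŵ(x) := e^δ ∫_{−∞}^{−δ} e^t w(x,t) dt + C is twice continuously differentiable with D²ŵ(x) = e^δ ∫_{−∞}^{−δ}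 e^t D²w(x,t) dt. Then ŵ is nondecreasing in each coordinate, satisfies ŵ(x + c'𝟙) = ŵ(x) + c' for all x, c', and ŵ(x) ≥ max_i x_i + c · sup_{q ∈ [−1,1]^N} ⟨D²ŵ(x)·q, q⟩ for all x ∈ ℝ^N. -/
open MeasureTheory Real

theorem fixed_horizon_to_geometric_upper_bound
    {N : ℕ} (hN : 2 ≤ N) (δ : ℝ) (hδ : δ ∈ Set.Ioo (0 : ℝ) 1)
    (c : ℝ) (hc : c = (1 - δ) / (2 * δ))
    (w : (Fin N → ℝ) → ℝ → ℝ)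
    (hwx : ∀ t : ℝ, t < 0 → ContDiff ℝ 2 (fun y => w y t))
    (hwt : ∀ x : Fin N → ℝ, ContDiffOn ℝ 1 (w x) (Set.Iio 0))
    -- (i) linearity in the direction of the all-ones vector
    (hlin : ∀ (x : Fin N → ℝ) (t : ℝ), t < 0 → ∀ c' : ℝ,
      w (fun j => x j + c') t = w x t + c')
    -- (ii) nondecreasing in each coordinate
    (hmono : ∀ t : ℝ, t < 0 → Monotone (fun y => w y t))
    -- (iii) the parabolic inequality w_t + c · sup_{q ∈ [-1,1]^N} ⟨D²w·q,q⟩ ≤ 0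
    (hpde : ∀ (x : Fin N → ℝ) (t : ℝ), t < 0 →
      deriv (w x) t + c *
        (⨆ q : (Set.Icc (-1 : Fin N → ℝ) 1),
          iteratedFDeriv ℝ 2 (fun y => w y t) x ![(q : Fin N → ℝ), (q : Fin N → ℝ)]) ≤ 0)
    -- (iv) final-time bound
    (C : ℝ) (hC : ∀ x : Fin N → ℝ, vecMax x - w x (-δ) ≤ C)
    -- (v) integrability, vanishing at -∞, and regularity of the transform
    (hint : ∀ x : Fin N → ℝ, IntegrableOn (fun t => Real.exp t * w x t) (Set.Iio (-δ)))
    (hint' : ∀ x : Fin N → ℝ,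
      IntegrableOn (fun t => Real.exp t * deriv (w x) t) (Set.Iio (-δ)))
    (hint'' : ∀ x : Fin N → ℝ,
      IntegrableOn (fun t => Real.exp t *
        ⨆ q : (Set.Icc (-1 : Fin N → ℝ) 1),
          iteratedFDeriv ℝ 2 (fun y => w y t) x ![(q : Fin N → ℝ), (q : Fin N → ℝ)])
        (Set.Iio (-δ)))
    (hlim : ∀ x : Fin N → ℝ,
      Filter.Tendsto (fun t => Real.exp t * w x t) Filter.atBot (nhds 0))
    (what : (Fin N → ℝ) → ℝ)
    (hwhat : ∀ x, what x = Real.exp δ * (∫ t in Set.Iio (-δ), Real.exp t * w x t) + C)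
    (hwhat_smooth : ContDiff ℝ 2 what)
    (hwhat_hess : ∀ (x q : Fin N → ℝ),
      iteratedFDeriv ℝ 2 what x ![q, q] =
        Real.exp δ * ∫ t in Set.Iio (-δ),
          Real.exp t * iteratedFDeriv ℝ 2 (fun y => w y t) x ![q, q]) :
    Monotone what ∧
      (∀ (x : Fin N → ℝ) (c' : ℝ), what (fun j => x j + c') = what x + c') ∧
      ∀ x : Fin N → ℝ,
        what x ≥ vecMax x + c *
          ⨆ q : (Set.Icc (-1 : Fin N → ℝ) 1),
            iteratedFDeriv ℝ 2 what x ![(q : Fin N → ℝ), (q : Fin N → ℝ)] := by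
  have hδ0 : 0 < δ := hδ.1
  have hc0 : 0 ≤ c := by
    rw [hc]
    exact div_nonneg (by linarith [hδ.2]) (by linarith)
  have hneg : ∀ t ∈ Set.Iio (-δ), t < 0 := fun t ht => by
    have : t < -δ := ht
    linarith
  have hexpI : IntegrableOn (fun t : ℝ => Real.exp t) (Set.Iio (-δ)) :=
    (integrableOn_exp_Iic (-δ)).mono_set Set.Iio_subset_Iic_self
  have hee : Real.exp δ * Real.exp (-δ) = 1 := by
    rw [← Real.exp_add]; simp
  refine ⟨?_, ?_, ?_⟩
  · intro x y hxy
    rw [hwhat, hwhat]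
    have : (∫ t in Set.Iio (-δ), Real.exp t * w x t) ≤ ∫ t in Set.Iio (-δ), Real.exp t * w y t :=
      setIntegral_mono_on (hint x) (hint y) measurableSet_Iio fun t ht =>
        mul_le_mul_of_nonneg_left (hmono t (hneg t ht) hxy) (Real.exp_pos t).le
    have := mul_le_mul_of_nonneg_left this (Real.exp_pos δ).le
    linarith
  · intro x c'
    rw [hwhat, hwhat]
    have h1 : (∫ t in Set.Iio (-δ), Real.exp t * w (fun j => x j + c') t)
        = ∫ t in Set.Iio (-δ), (Real.exp t * w x t + Real.exp t * c') :=
      setIntegral_congr_fun measurableSet_Iio fun t ht => by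
        simp only [hlin x t (hneg t ht) c']
        ring
    rw [h1, integral_add (hint x) (hexpI.mul_const c'), integral_mul_const,
      ← integral_Iic_eq_integral_Iio (f := fun t : ℝ => Real.exp t), integral_exp_Iic]
    linear_combination c' * hee
  · intro x
    set S : ℝ → ℝ := fun t => ⨆ q : (Set.Icc (-1 : Fin N → ℝ) 1),
      iteratedFDeriv ℝ 2 (fun y => w y t) x ![(q : Fin N → ℝ), (q : Fin N → ℝ)] with hS
    have hle : ∀ (t : ℝ) (q : Set.Icc (-1 : Fin N → ℝ) 1),
        iteratedFDeriv ℝ 2 (fun y => w y t) x ![(q : Fin N → ℝ), (q : Fin N → ℝ)] ≤ S t := by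
      intro t q
      have hcont : Continuous fun q : Set.Icc (-1 : Fin N → ℝ) 1 =>
          iteratedFDeriv ℝ 2 (fun y => w y t) x ![(q : Fin N → ℝ), (q : Fin N → ℝ)] := by
        refine (iteratedFDeriv ℝ 2 (fun y => w y t) x).cont.comp ?_
        refine continuous_pi fun i => ?_
        fin_cases i
        · exact continuous_subtype_val
        · exact continuous_subtype_val
      exact le_ciSup (isCompact_range hcont).bddAbove q
    have hz : (0 : Fin N → ℝ) ∈ Set.Icc (-1 : Fin N → ℝ) 1 := by
      constructor <;> intro i <;> simp
    have hS0 : ∀ t, 0 ≤ S t := by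
      intro t
      have h := hle t ⟨0, hz⟩
      rwa [(iteratedFDeriv ℝ 2 (fun y => w y t) x).map_coord_zero (0 : Fin 2) (by simp)] at h
    haveI : Nonempty (Set.Icc (-1 : Fin N → ℝ) 1) := ⟨⟨0, hz⟩⟩
    have hsup : (⨆ q : (Set.Icc (-1 : Fin N → ℝ) 1),
        iteratedFDeriv ℝ 2 what x ![(q : Fin N → ℝ), (q : Fin N → ℝ)])
        ≤ Real.exp δ * ∫ t in Set.Iio (-δ), Real.exp t * S t := by
      refine ciSup_le fun q => ?_
      rw [hwhat_hess]
      refine mul_le_mul_of_nonneg_left ?_ (Real.exp_pos δ).le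
      by_cases hq : IntegrableOn (fun t => Real.exp t *
          iteratedFDeriv ℝ 2 (fun y => w y t) x ![(q : Fin N → ℝ), (q : Fin N → ℝ)])
          (Set.Iio (-δ))
      · exact setIntegral_mono_on hq (hint'' x) measurableSet_Iio fun t _ =>
          mul_le_mul_of_nonneg_left (hle t q) (Real.exp_pos t).le
      · rw [integral_undef hq]
        exact integral_nonneg fun t => mul_nonneg (Real.exp_pos t).le (hS0 t)
    -- integration by parts
    have hder : ∀ t, t < 0 → HasDerivAt (w x) (deriv (w x) t) t := fun t ht =>
      (((hwt x).differentiableOn (by norm_num)).differentiableAt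
        (Iio_mem_nhds ht)).hasDerivAt
    have hder2 : ∀ t, t < 0 → HasDerivAt (fun t => Real.exp t * w x t)
        (Real.exp t * w x t + Real.exp t * deriv (w x) t) t := fun t ht =>
      (Real.hasDerivAt_exp t).mul (hder t ht)
    have hparts := integral_Iic_of_hasDerivAt_of_tendsto (a := -δ)
      (hder2 (-δ) (by linarith)).continuousAt.continuousWithinAt
      (fun t ht => hder2 t (hneg t ht))
      ((integrableOn_Iic_iff_integrableOn_Iio).2 ((hint x).add (hint' x))) (hlim x)
    rw [integral_Iic_eq_integral_Iio, integral_add (hint x) (hint' x)] at hparts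
    have hineq : (∫ t in Set.Iio (-δ), Real.exp t * deriv (w x) t)
        ≤ ∫ t in Set.Iio (-δ), -c * (Real.exp t * S t) :=
      setIntegral_mono_on (hint' x) ((hint'' x).const_mul (-c)) measurableSet_Iio fun t ht => by
        have h := mul_le_mul_of_nonneg_left (hpde x t (hneg t ht)) (Real.exp_pos t).le
        change Real.exp t * (deriv (w x) t + c * S t) ≤ _ at h
        linarith
    rw [integral_const_mul] at hineq
    have h1 := mul_le_mul_of_nonneg_left hineq (Real.exp_pos δ).le
    have h2 := mul_le_mul_of_nonneg_left hsup hc0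
    have h3 := hC x
    have h4 : Real.exp δ * (∫ t in Set.Iio (-δ), Real.exp t * w x t)
        = w x (-δ) - Real.exp δ * ∫ t in Set.Iio (-δ), Real.exp t * deriv (w x) t := by
      linear_combination Real.exp δ * hparts + w x (-δ) * hee
    rw [hwhat, h4]
    linarith
end

section
/- Let N ≥ 2, δ ∈ (0,1). Let Φ : ℝ^N → ℝ be twice continuously differentiable, nondecreasing in each coordinate, with Φ(x + c𝟙) = Φ(x) + c for all x,c, and Φ(x) ≥ max_i x_i for all x. Let k ∈ ℝ satisfy k + ((1−δ)/(2δ)) ⟨D²Φ(y)·q, q⟩ ≤ 0 for all y ∈ ℝ^N and all q ∈ [−1,1]^N. Define ŵ(x) = Φ(x) − k and let h be the dynamic-programming value of the game for the player ∇ŵ = ∇Φ. Then for every x ∈ ℝ^N and every n ∈ ℕ, h(x,n) ≤ ŵ(x) = Φ(x) − k, with no discretization-error term. -/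
open MeasureTheory Real

lemma line_hasDerivAt {N : ℕ} (Φ : (Fin N → ℝ) → ℝ) (hd : Differentiable ℝ Φ)
    (x v : Fin N → ℝ) (t : ℝ) :
    HasDerivAt (fun t : ℝ => Φ (x + t • v)) (fderiv ℝ Φ (x + t • v) v) t := by
  have h1 : HasDerivAt (fun t : ℝ => x + t • v) v t := by
    simpa using ((hasDerivAt_id t).smul_const v).const_add x
  exact (hd (x + t • v)).hasFDerivAt.comp_hasDerivAt t h1

lemma taylor_two_bound {N : ℕ} (Φ : (Fin N → ℝ) → ℝ) (hΦ : ContDiff ℝ 2 Φ)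
    (x v : Fin N → ℝ) (C : ℝ)
    (hC : ∀ y, iteratedFDeriv ℝ 2 Φ y ![v, v] ≤ C) :
    Φ (x + v) ≤ Φ x + fderiv ℝ Φ x v + C / 2 := by
  have hd : Differentiable ℝ Φ := hΦ.differentiable (by norm_num)
  have hd2 : Differentiable ℝ (fderiv ℝ Φ) :=
    (hΦ.fderiv_right (m := 1) (by norm_num)).differentiable (by norm_num)
  have h2 : ∀ t : ℝ, HasDerivAt (fun t : ℝ => fderiv ℝ Φ (x + t • v) v - C * t)
      (fderiv ℝ (fderiv ℝ Φ) (x + t • v) v v - C) t := by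
    intro t
    have h1 : HasDerivAt (fun t : ℝ => x + t • v) v t := by
      simpa using ((hasDerivAt_id t).smul_const v).const_add x
    have h3 := (hd2 (x + t • v)).hasFDerivAt.comp_hasDerivAt t h1
    have h4 := h3.clm_apply (hasDerivAt_const t v)
    have h5 := h4.sub ((hasDerivAt_id t).const_mul C)
    refine h5.congr_deriv ?_
    simp
  have hanti : Antitone (fun t : ℝ => fderiv ℝ Φ (x + t • v) v - C * t) := by
    apply antitone_of_deriv_nonpos (fun t => (h2 t).differentiableAt)
    intro t
    rw [(h2 t).deriv]
    have := hC (x + t • v)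
    rw [iteratedFDeriv_two_apply] at this
    simp at this
    linarith
  have h3 : ∀ t : ℝ, HasDerivAt
      (fun t : ℝ => Φ (x + t • v) - fderiv ℝ Φ x v * t - C / 2 * t ^ 2)
      (fderiv ℝ Φ (x + t • v) v - fderiv ℝ Φ x v - C * t) t := by
    intro t
    have := ((line_hasDerivAt Φ hd x v t).sub
      ((hasDerivAt_id t).const_mul (fderiv ℝ Φ x v))).sub
      ((hasDerivAt_pow 2 t).const_mul (C / 2))
    refine this.congr_deriv ?_
    simp
    ring
  have hanti2 : AntitoneOn
      (fun t : ℝ => Φ (x + t • v) - fderiv ℝ Φ x v * t - C / 2 * t ^ 2) (Set.Icc 0 1) := by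
    apply antitoneOn_of_deriv_nonpos (convex_Icc 0 1)
    · exact fun t _ => (h3 t).continuousAt.continuousWithinAt
    · exact fun t _ => (h3 t).differentiableAt.differentiableWithinAt
    · intro t ht
      rw [interior_Icc] at ht
      rw [(h3 t).deriv]
      have := hanti ht.1.le
      simp at this
      linarith
  have := hanti2 (by simp : (0:ℝ) ∈ Set.Icc (0:ℝ) 1) (by simp : (1:ℝ) ∈ Set.Icc (0:ℝ) 1) (by norm_num)
  simp at this
  linarith

theorem fixed_to_geometric_upper_bound_certain_potential
    {N : ℕ} (hN : 2 ≤ N) (δ : ℝ) (hδ : δ ∈ Set.Ioo (0 : ℝ) 1)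
    (Φ : (Fin N → ℝ) → ℝ) (hΦ : ContDiff ℝ 2 Φ)
    (hmono : Monotone Φ)
    (hlin : ∀ (x : Fin N → ℝ) (c : ℝ), Φ (fun j => x j + c) = Φ x + c)
    (hfinal : ∀ x : Fin N → ℝ, vecMax x ≤ Φ x)
    (k : ℝ)
    (hk : ∀ (y : Fin N → ℝ), ∀ q ∈ Set.Icc (-1 : Fin N → ℝ) 1,
      k + (1 - δ) / (2 * δ) * iteratedFDeriv ℝ 2 Φ y ![q, q] ≤ 0) :
    ∀ (x : Fin N → ℝ) (n : ℕ), hVal δ (fun y => Φ y - k) n x ≤ Φ x - k := by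
  obtain ⟨hδ0, hδ1⟩ := hδ
  have hd : Differentiable ℝ Φ := hΦ.differentiable (by norm_num)
  have hk0 : k ≤ 0 := by
    have := hk 0 0 (by constructor <;> intro i <;> simp)
    rw [iteratedFDeriv_two_apply] at this
    simpa using this
  have hp0 : ∀ x i, 0 ≤ fderiv ℝ Φ x (Pi.single i 1) := by
    intro x i
    have h1 := line_hasDerivAt Φ hd x (Pi.single i 1) 0
    have hm : Monotone (fun t : ℝ => Φ (x + t • (Pi.single i 1 : Fin N → ℝ))) := by
      intro s t hst
      apply hmono
      have : (0 : Fin N → ℝ) ≤ Pi.single i 1 := by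
        rw [Pi.single_nonneg]; norm_num
      gcongr
    have h2 := hm.deriv_nonneg (x := 0)
    rw [h1.deriv] at h2
    simpa using h2
  have hsum : ∀ (x v : Fin N → ℝ),
      ∑ i, fderiv ℝ Φ x (Pi.single i 1) * v i = fderiv ℝ Φ x v := by
    intro x v
    conv_rhs => rw [pi_eq_sum_univ' v]
    rw [map_sum]
    refine Finset.sum_congr rfl fun i _ => ?_
    rw [map_smul, smul_eq_mul, mul_comm]
  have hp1 : ∀ x, ∑ i, fderiv ℝ Φ x (Pi.single i 1) = 1 := by
    intro x
    have h := hsum x 1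
    simp only [Pi.one_apply, mul_one] at h
    rw [h]
    have h1 := line_hasDerivAt Φ hd x 1 0
    have h2 : HasDerivAt (fun t : ℝ => Φ (x + t • (1 : Fin N → ℝ))) 1 0 := by
      have h3 : (fun t : ℝ => Φ (x + t • (1 : Fin N → ℝ))) = fun t => Φ x + t := by
        funext t
        rw [← hlin x t]
        congr 1
        ext j
        simp
      rw [h3]
      exact (hasDerivAt_id (0:ℝ)).const_add (Φ x)
    have h4 := h1.unique h2
    simpa using h4
  have hfd : ∀ x, fderiv ℝ (fun y => Φ y - k) x = fderiv ℝ Φ x := by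
    intro x
    exact fderiv_sub_const k
  intro x n
  induction n generalizing x with
  | zero =>
    simp only [hVal]
    linarith [hfinal x]
  | succ n ih =>
    simp only [hVal, hfd]
    have hne : Nonempty (Set.Icc (-1 : Fin N → ℝ) 1) :=
      ⟨⟨0, by constructor <;> intro i <;> simp⟩⟩
    have hpos : 0 < 1 - δ := by linarith
    have hsup : (⨆ q : (Set.Icc (-1 : Fin N → ℝ) 1),
          ∑ i, fderiv ℝ Φ x (Pi.single i 1) *
            hVal δ (fun y => Φ y - k) n
              (fun j => x j + (q : Fin N → ℝ) i - (q : Fin N → ℝ) j))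
        ≤ Φ x - k - k * δ / (1 - δ) := by
      apply ciSup_le
      rintro ⟨q, hq⟩
      have hT := taylor_two_bound Φ hΦ x (-q) (-k * (2 * δ) / (1 - δ)) (by
        intro y
        have := hk y (-q) ⟨neg_le_neg hq.2, by simpa using neg_le_neg hq.1⟩
        rw [le_div_iff₀ hpos]
        have h2 : (1 - δ) / (2 * δ) * iteratedFDeriv ℝ 2 Φ y ![-q, -q] ≤ -k := by linarith
        rw [div_mul_eq_mul_div, div_le_iff₀ (by positivity)] at h2
        linarith)
      calc _ ≤ ∑ i, fderiv ℝ Φ x (Pi.single i 1) * ((Φ (x + -q) - k) + q i) := by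
            apply Finset.sum_le_sum
            intro i _
            apply mul_le_mul_of_nonneg_left _ (hp0 x i)
            refine (ih _).trans (le_of_eq ?_)
            have := hlin (x + -q) (q i)
            have h2 : (fun j => x j + q i - q j) = (fun j => (x + -q) j + q i) := by
              ext j
              simp
              ring
            simp only [h2]
            linarith
        _ = (Φ (x + -q) - k) + fderiv ℝ Φ x q := by
            simp only [mul_add, Finset.sum_add_distrib]
            rw [← Finset.sum_mul, hp1, hsum, one_mul]
        _ ≤ _ := by
            rw [map_neg] at hT
            have : -k * (2 * δ) / (1 - δ) / 2 = - (k * δ / (1 - δ)) := by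
              field_simp
            linarith
    have h1 := mul_le_mul_of_nonneg_left hsup hpos.le
    have h2 := mul_le_mul_of_nonneg_left (hfinal x) hδ0.le
    have h3 : (1 - δ) * (Φ x - k - k * δ / (1 - δ)) = (1 - δ) * (Φ x - k) - k * δ := by
      field_simp
    linarith
end

section
/- Let N ≥ 2 and δ ∈ (0,1). Let η > 0 and Φ(x) = (1/η) log(Σ_{k=1}^N e^{η x_k}), and let h be the dynamic-programming value of the game for the exponential weights player p(x)_i = e^{η x_i}/Σ_{k=1}^N e^{η x_k} = ∂_i Φ(x). Then for every x ∈ ℝ^N and every n ∈ ℕ, h(x,n) ≤ Φ(x) + ((1−δ)/(2δ)) η. In particular, taking η = √(2δ log N/(1−δ)), one has h(0,n) ≤ √(2(1−δ) log N / δ) for all n ∈ ℕ. -/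
open MeasureTheory Real

/-- The log-sum-exp (exponential weights) potential. -/
noncomputable def lse {N : ℕ} (η : ℝ) (x : Fin N → ℝ) : ℝ :=
  (1 / η) * Real.log (∑ k, Real.exp (η * x k))


lemma aux_fderiv {N : ℕ} (hN : 0 < N) (η : ℝ) (hη : 0 < η) (x : Fin N → ℝ) (i : Fin N) :
    fderiv ℝ (lse η) x (Pi.single i 1) =
      Real.exp (η * x i) / ∑ k, Real.exp (η * x k) := by
  have : Nonempty (Fin N) := ⟨⟨0, hN⟩⟩
  have hS : 0 < ∑ k, Real.exp (η * x k) :=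
    Finset.sum_pos (fun k _ => Real.exp_pos _) Finset.univ_nonempty
  have h1 : ∀ k ∈ (Finset.univ : Finset (Fin N)),
      HasFDerivAt (fun y : Fin N → ℝ => Real.exp (η * y k))
      (Real.exp (η * x k) • (η • (ContinuousLinearMap.proj k : (Fin N → ℝ) →L[ℝ] ℝ))) x := by
    intro k _
    exact ((hasFDerivAt_apply (𝕜 := ℝ) k x).const_mul η).exp
  have h2 := ((HasFDerivAt.fun_sum h1).log hS.ne').const_mul (1 / η)
  have h3 : fderiv ℝ (lse η) x = _ := h2.fderiv
  rw [h3]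
  simp only [ContinuousLinearMap.smul_apply, ContinuousLinearMap.sum_apply,
    ContinuousLinearMap.proj_apply, smul_eq_mul, Pi.single_apply]
  simp
  field_simp

lemma aux_hoeffding {N : ℕ} (p q : Fin N → ℝ) (hp : ∀ i, 0 ≤ p i) (hs : ∑ i, p i = 1)
    (hq : ∀ i, q i ∈ Set.Icc (-1 : ℝ) 1) (t : ℝ) :
    ∑ i, p i * Real.exp (t * (q i - ∑ j, p j * q j)) ≤ Real.exp (t ^ 2 / 2) := by
  let P : PMF (Fin N) := PMF.ofFintype (fun i => ENNReal.ofReal (p i)) (by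
    rw [← ENNReal.ofReal_sum_of_nonneg (fun i _ => hp i), hs, ENNReal.ofReal_one])
  have hint : ∀ f : Fin N → ℝ, ∫ a, f a ∂P.toMeasure = ∑ i, p i * f i := by
    intro f
    rw [PMF.integral_eq_sum]
    simp [P, ENNReal.toReal_ofReal, hp]
  have h := ProbabilityTheory.hasSubgaussianMGF_of_mem_Icc (μ := P.toMeasure) (X := q)
    (a := -1) (b := 1) (measurable_of_finite q).aemeasurable (Filter.Eventually.of_forall hq)
  have h2 := h.mgf_le t
  rw [ProbabilityTheory.mgf, hint, hint] at h2
  refine h2.trans (le_of_eq ?_)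
  congr 1
  norm_num

lemma aux_lse_add {N : ℕ} (hN : 0 < N) (η : ℝ) (hη : 0 < η) (x q : Fin N → ℝ) (c : ℝ) :
    lse η (fun j => x j + c - q j) = c + lse η (fun j => x j - q j) := by
  have : Nonempty (Fin N) := ⟨⟨0, hN⟩⟩
  have hS : 0 < ∑ k, Real.exp (η * (x k - q k)) :=
    Finset.sum_pos (fun k _ => Real.exp_pos _) Finset.univ_nonempty
  unfold lse
  have : ∑ k, Real.exp (η * (x k + c - q k)) =
      Real.exp (η * c) * ∑ k, Real.exp (η * (x k - q k)) := by
    rw [Finset.mul_sum]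
    refine Finset.sum_congr rfl fun k _ => ?_
    rw [← Real.exp_add]; congr 1; ring
  rw [this, Real.log_mul (Real.exp_pos _).ne' hS.ne', Real.log_exp]
  field_simp

lemma aux_max {N : ℕ} (hN : 0 < N) (η : ℝ) (hη : 0 < η) (x : Fin N → ℝ) :
    vecMax x ≤ lse η x := by
  have : Nonempty (Fin N) := ⟨⟨0, hN⟩⟩
  refine ciSup_le fun i => ?_
  have h : Real.exp (η * x i) ≤ ∑ k, Real.exp (η * x k) :=
    Finset.single_le_sum (f := fun k => Real.exp (η * x k))
      (fun k _ => (Real.exp_pos _).le) (Finset.mem_univ i)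
  have h2 := Real.log_le_log (Real.exp_pos _) h
  rw [Real.log_exp] at h2
  unfold lse
  rw [one_div, ← div_eq_inv_mul, le_div_iff₀ hη]
  linarith

lemma aux_step {N : ℕ} (hN : 0 < N) (η : ℝ) (hη : 0 < η) (x q : Fin N → ℝ)
    (hq : ∀ i, q i ∈ Set.Icc (-1 : ℝ) 1) (p : Fin N → ℝ)
    (hp : ∀ i, p i = Real.exp (η * x i) / ∑ k, Real.exp (η * x k)) :
    ∑ j, p j * q j + lse η (fun j => x j - q j) ≤ lse η x + η / 2 := by
  have : Nonempty (Fin N) := ⟨⟨0, hN⟩⟩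
  have hS : 0 < ∑ k, Real.exp (η * x k) :=
    Finset.sum_pos (fun k _ => Real.exp_pos _) Finset.univ_nonempty
  have hT : 0 < ∑ k, Real.exp (η * (x k - q k)) :=
    Finset.sum_pos (fun k _ => Real.exp_pos _) Finset.univ_nonempty
  have hp0 : ∀ i, 0 ≤ p i := fun i => by rw [hp]; positivity
  have hs : ∑ i, p i = 1 := by
    simp only [hp]; rw [← Finset.sum_div, div_self hS.ne']
  have h := aux_hoeffding p q hp0 hs hq (-η)
  set m := ∑ j, p j * q j with hm
  have e : ∑ i, p i * Real.exp (-η * (q i - m)) =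
      Real.exp (η * m) * (∑ k, Real.exp (η * (x k - q k))) / ∑ k, Real.exp (η * x k) := by
    rw [Finset.mul_sum, Finset.sum_div]
    refine Finset.sum_congr rfl fun k _ => ?_
    rw [hp, div_mul_eq_mul_div, ← Real.exp_add, ← Real.exp_add]
    congr 2; ring
  rw [e] at h
  have h2 := Real.log_le_log (by positivity) h
  rw [Real.log_exp, Real.log_div (by positivity) hS.ne',
    Real.log_mul (Real.exp_pos _).ne' hT.ne', Real.log_exp] at h2
  unfold lse
  rw [← sub_nonneg]
  have : 1 / η * Real.log (∑ k, Real.exp (η * x k)) + η / 2 -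
      (m + 1 / η * Real.log (∑ k, Real.exp (η * (x k - q k)))) =
      1 / η * ((-η) ^ 2 / 2 - (η * m + Real.log (∑ k, Real.exp (η * (x k - q k))) -
        Real.log (∑ k, Real.exp (η * x k)))) := by
    field_simp; ring
  rw [this]
  exact mul_nonneg (by positivity) (by linarith)

lemma aux_main {N : ℕ} (hN : 0 < N) (δ : ℝ) (hδ : δ ∈ Set.Ioo (0 : ℝ) 1)
    (η : ℝ) (hη : 0 < η) (n : ℕ) : ∀ (x : Fin N → ℝ),
      hVal δ (lse η) n x ≤ lse η x + (1 - δ) / (2 * δ) * η := by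
  have : Nonempty (Fin N) := ⟨⟨0, hN⟩⟩
  obtain ⟨h0, h1⟩ := hδ
  have h1' : 0 < 1 - δ := by linarith
  induction n with
  | zero =>
    intro x
    have : 0 ≤ (1 - δ) / (2 * δ) * η := by positivity
    have := aux_max hN η hη x
    simp only [hVal]
    linarith
  | succ n ih =>
    intro x
    simp only [hVal]
    set C := (1 - δ) / (2 * δ) * η with hC
    have hCe : δ * C = (1 - δ) * (η / 2) := by rw [hC]; field_simp
    have : Nonempty (Set.Icc (-1 : Fin N → ℝ) 1) :=
      ⟨⟨0, by constructor <;> intro i <;> simp⟩⟩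
    have hS : 0 < ∑ k, Real.exp (η * x k) :=
      Finset.sum_pos (fun k _ => Real.exp_pos _) Finset.univ_nonempty
    have key : (⨆ q : (Set.Icc (-1 : Fin N → ℝ) 1),
          ∑ i, fderiv ℝ (lse η) x (Pi.single i 1) *
            hVal δ (lse η) n (fun j => x j + (q : Fin N → ℝ) i - (q : Fin N → ℝ) j))
          ≤ lse η x + η / 2 + C := by
      refine ciSup_le fun q => ?_
      obtain ⟨q, hq1, hq2⟩ := q
      let p : Fin N → ℝ := fun i => Real.exp (η * x i) / ∑ k, Real.exp (η * x k)
      have hp0 : ∀ i, 0 ≤ p i := fun i => by positivity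
      have hs : ∑ i, p i = 1 := by
        simp only [p]; rw [← Finset.sum_div, div_self hS.ne']
      have hst := aux_step hN η hη x q (fun i => ⟨hq1 i, hq2 i⟩) p (fun _ => rfl)
      calc _ ≤ ∑ i, p i * (q i + lse η (fun j => x j - q j) + C) := by
            refine Finset.sum_le_sum fun i _ => ?_
            rw [aux_fderiv hN η hη]
            refine mul_le_mul_of_nonneg_left ?_ (hp0 i)
            rw [← aux_lse_add hN η hη]
            exact ih _
        _ = ∑ j, p j * q j + (∑ i, p i) * (lse η (fun j => x j - q j) + C) := by
            rw [Finset.sum_mul, ← Finset.sum_add_distrib]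
            exact Finset.sum_congr rfl fun i _ => by ring
        _ ≤ _ := by rw [hs]; linarith
    have a := mul_le_mul_of_nonneg_left key h1'.le
    have b := mul_le_mul_of_nonneg_left (aux_max hN η hη x) h0.le
    linarith

theorem exponential_weights_upper_bound
    {N : ℕ} (hN : 2 ≤ N) (δ : ℝ) (hδ : δ ∈ Set.Ioo (0 : ℝ) 1)
    (η : ℝ) (hη : 0 < η) :
    (∀ (x : Fin N → ℝ) (n : ℕ),
      hVal δ (lse η) n x ≤ lse η x + (1 - δ) / (2 * δ) * η) ∧
    (η = Real.sqrt (2 * δ * Real.log N / (1 - δ)) →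
      ∀ n : ℕ, hVal δ (lse η) n (0 : Fin N → ℝ) ≤ Real.sqrt (2 * (1 - δ) * Real.log N / δ)) := by
  refine ⟨fun x n => aux_main (by omega) δ hδ η hη n x, fun he n => ?_⟩
  refine (aux_main (by omega) δ hδ η hη n 0).trans ?_
  obtain ⟨h0, h1⟩ := hδ
  have h1' : 0 < 1 - δ := by linarith
  have hL : 0 ≤ Real.log N := Real.log_natCast_nonneg N
  have hsq : η ^ 2 = 2 * δ * Real.log N / (1 - δ) := by
    rw [he]; exact Real.sq_sqrt (by positivity)
  have hLe : Real.log N = (1 - δ) * η ^ 2 / (2 * δ) := by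
    rw [hsq]; field_simp
  have hl : lse η (0 : Fin N → ℝ) = 1 / η * Real.log N := by simp [lse]
  apply Real.le_sqrt_of_sq_le
  rw [hl, hLe]
  apply le_of_eq
  field_simp
  ring
end

section
/- Let N ≥ 1, κ > 0, and δ > 0. Then for every x ∈ ℝ^N, |φ(x,−δ) − max_i x_i| ≤ √(2κδ) · E_{Y∼γ_N}[max_i Y_i], where φ(x,−δ) = (2πσ²)^{−N/2} ∫_{ℝ^N} e^{−‖y‖²/(2σ²)} max_k(x_k − y_k) dy with σ² = 2κδ. -/
open MeasureTheory Real ProbabilityTheory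

/-- The heat potential. -/
noncomputable def heatPot (N : ℕ) (κ : ℝ) (x : Fin N → ℝ) (t : ℝ) : ℝ :=
  (2 * Real.pi * (-2 * κ * t)) ^ (-(N : ℝ) / 2) *
    ∫ y : Fin N → ℝ,
      Real.exp (-(∑ i, y i ^ 2) / (2 * (-2 * κ * t))) * (⨆ k, (x k - y k))

/-- The standard Gaussian measure on `ℝ^N` (mean 0, identity covariance). -/
noncomputable def stdGaussian (N : ℕ) : Measure (Fin N → ℝ) :=
  Measure.pi fun _ => gaussianReal 0 1

lemma aux_pi_density (N : ℕ) (v : NNReal) (hv : v ≠ 0) :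
    Measure.pi (fun _ : Fin N => gaussianReal 0 v) =
      (volume : Measure (Fin N → ℝ)).withDensity
        (fun y => ENNReal.ofReal (∏ i, gaussianPDFReal 0 v (y i))) := by
  refine Measure.pi_eq fun s hs => ?_
  rw [withDensity_apply _ (MeasurableSet.univ_pi hs), volume_pi, Measure.restrict_pi_pi,
    ← ofReal_integral_eq_lintegral_ofReal, integral_fintype_prod_eq_prod,
    ENNReal.ofReal_prod_of_nonneg]
  · refine Finset.prod_congr rfl fun i _ => ?_
    rw [gaussianReal_apply_eq_integral _ hv]
  · exact fun i _ => integral_nonneg fun y => gaussianPDFReal_nonneg _ _ _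
  · exact Integrable.fintype_prod fun i => (integrable_gaussianPDFReal 0 v).restrict
  · exact Filter.Eventually.of_forall fun y =>
      Finset.prod_nonneg fun i _ => gaussianPDFReal_nonneg _ _ _

lemma aux_pi_map (N : ℕ) (c : ℝ) (v : NNReal) (hv : (v : ℝ) = c ^ 2) :
    (Measure.pi (fun _ : Fin N => gaussianReal 0 1)).map (fun y i => c * y i) =
      Measure.pi (fun _ : Fin N => gaussianReal 0 v) := by
  have h : (gaussianReal 0 1).map (c * ·) = gaussianReal 0 v := by
    rw [gaussianReal_map_const_mul]
    congr 1
    · simp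
    · ext; simp [hv]
  rw [Measure.pi_map_pi (f := fun _ y => c * y) (fun i => by fun_prop), h]

lemma aux_integrable (N : ℕ) (hN : 1 ≤ N) (x : Fin N → ℝ) (c : ℝ) :
    Integrable (fun y : Fin N → ℝ => ⨆ k, (x k - c * y k))
      (Measure.pi (fun _ : Fin N => gaussianReal 0 1)) := by
  have : Nonempty (Fin N) := ⟨⟨0, hN⟩⟩
  have hy : ∀ i : Fin N, Integrable (fun y : Fin N → ℝ => y i)
      (Measure.pi (fun _ : Fin N => gaussianReal 0 1)) := fun i =>
    integrable_eval (IsGaussian.integrable_id)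
  have hg : Integrable (fun y : Fin N → ℝ => ∑ k, |x k - c * y k|)
      (Measure.pi (fun _ : Fin N => gaussianReal 0 1)) :=
    integrable_finsetSum _ fun i _ => ((integrable_const _).sub ((hy i).const_mul c)).abs
  refine hg.mono' ?_ (Filter.Eventually.of_forall fun y => ?_)
  · exact (Measurable.iSup fun i => by fun_prop).aestronglyMeasurable
  · obtain ⟨i, hi⟩ := exists_eq_ciSup_of_finite (f := fun k => x k - c * y k)
    rw [← hi, Real.norm_eq_abs]
    exact Finset.single_le_sum (f := fun k => |x k - c * y k|)
      (fun k _ => abs_nonneg _) (Finset.mem_univ i)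

lemma aux_heatPot (N : ℕ) (κ δ : ℝ) (hκ : 0 < κ) (hδ : 0 < δ) (x : Fin N → ℝ) :
    heatPot N κ x (-δ) = ∫ y, (⨆ k, (x k - Real.sqrt (2 * κ * δ) * y k))
      ∂(Measure.pi (fun _ : Fin N => gaussianReal 0 1)) := by
  have hp : 0 < 2 * κ * δ := by positivity
  obtain ⟨v, hv⟩ : ∃ v : NNReal, (v : ℝ) = 2 * κ * δ := ⟨⟨2 * κ * δ, hp.le⟩, rfl⟩
  have hv0 : v ≠ 0 := by
    rintro rfl
    simp at hv
    rcases hv with h | h <;> linarith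
  have hm : Measurable (fun y : Fin N → ℝ => ⨆ k, (x k - y k)) :=
    Measurable.iSup fun i => by fun_prop
  have h1 : ∫ y, (⨆ k, (x k - Real.sqrt (2 * κ * δ) * y k))
      ∂(Measure.pi (fun _ : Fin N => gaussianReal 0 1)) =
      ∫ y, (⨆ k, (x k - y k)) ∂(Measure.pi (fun _ : Fin N => gaussianReal 0 v)) := by
    rw [← aux_pi_map N (Real.sqrt (2 * κ * δ)) v (by rw [hv, Real.sq_sqrt hp.le]),
      integral_map (Measurable.aemeasurable (by fun_prop)) hm.aestronglyMeasurable]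
  rw [h1, aux_pi_density N v hv0, integral_withDensity_eq_integral_toReal_smul
    (by fun_prop) (by simp), heatPot, ← integral_const_mul]
  refine integral_congr_ae (Filter.Eventually.of_forall fun y => ?_)
  have e : -2 * κ * -δ = 2 * κ * δ := by ring
  have hpp : 0 < 2 * Real.pi * (2 * κ * δ) := by positivity
  simp only [smul_eq_mul]
  rw [ENNReal.toReal_ofReal (Finset.prod_nonneg fun i _ => gaussianPDFReal_nonneg _ _ _), e,
    ← mul_assoc]
  congr 1
  simp only [gaussianPDFReal_def, sub_zero, hv]
  rw [Finset.prod_mul_distrib, ← Real.exp_sum, Finset.prod_const, Finset.card_univ,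
    Fintype.card_fin]
  congr 1
  · rw [Real.sqrt_eq_rpow, ← Real.rpow_neg hpp.le, ← Real.rpow_natCast, ← Real.rpow_mul hpp.le]
    congr 1; ring
  · rw [← Finset.sum_div, Finset.sum_neg_distrib]

theorem heatPot_final_time_bound
    (N : ℕ) (hN : 1 ≤ N) (κ δ : ℝ) (hκ : 0 < κ) (hδ : 0 < δ) :
    ∀ x : Fin N → ℝ,
      |heatPot N κ x (-δ) - ⨆ i, x i| ≤
        Real.sqrt (2 * κ * δ) * ∫ y, (⨆ k, y k) ∂(stdGaussian N) := by
  intro x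
  have : Nonempty (Fin N) := ⟨⟨0, hN⟩⟩
  rw [aux_heatPot N κ δ hκ hδ x]
  unfold _root_.stdGaussian
  set μ := Measure.pi (fun _ : Fin N => gaussianReal 0 1) with hμ
  set σ := Real.sqrt (2 * κ * δ)
  have hσ : 0 ≤ σ := Real.sqrt_nonneg _
  have hI := aux_integrable N hN x σ
  have hpos : Integrable (fun y : Fin N → ℝ => ⨆ k, y k) μ := by
    simpa using aux_integrable N hN 0 (-1)
  have hneg : Integrable (fun y : Fin N → ℝ => ⨆ k, -1 * y k) μ := by
    simpa using aux_integrable N hN 0 1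
  have hm : Measurable (fun y : Fin N → ℝ => ⨆ k, y k) :=
    Measurable.iSup fun i => by fun_prop
  have hsym : ∫ y, (⨆ k, y k) ∂μ = ∫ y, (⨆ k, -1 * y k) ∂μ := by
    conv_lhs => rw [hμ, ← aux_pi_map N (-1) 1 (by simp)]
    rw [integral_map (Measurable.aemeasurable (by fun_prop)) hm.aestronglyMeasurable]
  have bdd : ∀ f : Fin N → ℝ, BddAbove (Set.range f) := fun f => (Set.finite_range f).bddAbove
  have hlow : ∫ y, ((⨆ i, x i) - σ * ⨆ k, y k) ∂μ ≤ ∫ y, (⨆ k, (x k - σ * y k)) ∂μ := by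
    refine integral_mono ((integrable_const _).sub (hpos.const_mul σ)) hI fun y => ?_
    rw [sub_le_iff_le_add]
    refine ciSup_le fun i => ?_
    have h1 := le_ciSup (bdd fun k => x k - σ * y k) i
    have h2 := mul_le_mul_of_nonneg_left (le_ciSup (bdd y) i) hσ
    dsimp only at h1 h2 ⊢
    linarith
  have hup : ∫ y, (⨆ k, (x k - σ * y k)) ∂μ ≤ ∫ y, ((⨆ i, x i) + σ * ⨆ k, -1 * y k) ∂μ := by
    refine integral_mono hI ((integrable_const _).add (hneg.const_mul σ)) fun y => ?_
    refine ciSup_le fun i => ?_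
    have h1 := le_ciSup (bdd x) i
    have h2 := mul_le_mul_of_nonneg_left (le_ciSup (bdd fun k => -1 * y k) i) hσ
    dsimp only at h1 h2 ⊢
    linarith
  rw [integral_sub (integrable_const _) (hpos.const_mul σ), integral_const_mul] at hlow
  rw [integral_add (integrable_const _) (hneg.const_mul σ), integral_const_mul, ← hsym] at hup
  simp only [integral_const, probReal_univ, one_smul] at hlow hup
  rw [abs_le]
  constructor <;> linarith
end

section
/- Let f(z) = √(2/π) e^{−z²/2} + z · erf(z/√2), where erf(y) = (2/√π) ∫_0^y e^{−s²} ds. Then for every z ≥ 0, −√(2/π) ≤ z − f(z) ≤ 0. -/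
open MeasureTheory Real

/-- The error function `erf(y) = (2/√π) ∫_0^y e^{-s²} ds`. -/
noncomputable def erf (y : ℝ) : ℝ :=
  (2 / Real.sqrt Real.pi) * ∫ s in (0 : ℝ)..y, Real.exp (-s ^ 2)

/-- `f(z) = √(2/π) e^(-z²/2) + z · erf(z/√2)`. -/
noncomputable def fAux (z : ℝ) : ℝ :=
  Real.sqrt (2 / Real.pi) * Real.exp (-z ^ 2 / 2) + z * erf (z / Real.sqrt 2)

lemma gauss_int : Integrable (fun s : ℝ => Real.exp (-s ^ 2)) := by
  simpa using integrable_exp_neg_mul_sq (b := 1) one_pos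

lemma gauss_int' : Integrable (fun s : ℝ => s * Real.exp (-s ^ 2)) := by
  simpa using integrable_mul_exp_neg_mul_sq (b := 1) one_pos

lemma one_sub_erf (y : ℝ) :
    1 - erf y = (2 / Real.sqrt Real.pi) * ∫ s in Set.Ioi y, Real.exp (-s ^ 2) := by
  have h := intervalIntegral.integral_interval_add_Ioi (a := 0) (b := y)
    (f := fun s : ℝ => Real.exp (-s ^ 2)) gauss_int.integrableOn gauss_int.integrableOn
  have h2 : ∫ s in Set.Ioi (0:ℝ), Real.exp (-s ^ 2) = Real.sqrt Real.pi / 2 := by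
    simpa using integral_gaussian_Ioi 1
  rw [h2] at h
  have hp : Real.sqrt Real.pi ≠ 0 := (Real.sqrt_pos.2 Real.pi_pos).ne'
  have h3 : (2 / Real.sqrt Real.pi) * (Real.sqrt Real.pi / 2) = 1 := by field_simp
  rw [← h3, ← h, erf]
  ring

lemma tail_first_moment (y : ℝ) :
    ∫ s in Set.Ioi y, s * Real.exp (-s ^ 2) = Real.exp (-y ^ 2) / 2 := by
  have hd : ∀ x ∈ Set.Ici y, HasDerivAt (fun s : ℝ => -Real.exp (-s ^ 2) / 2)
      (x * Real.exp (-x ^ 2)) x := by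
    intro x _
    have h := (((hasDerivAt_pow 2 x).fun_neg.exp).fun_neg).div_const 2
    refine h.congr_deriv ?_
    norm_num
    ring
  have ht : Filter.Tendsto (fun s : ℝ => -Real.exp (-s ^ 2) / 2) Filter.atTop (nhds 0) := by
    have h : Filter.Tendsto (fun s : ℝ => Real.exp (-s ^ 2)) Filter.atTop (nhds 0) :=
      Real.tendsto_exp_neg_atTop_nhds_zero.comp (Filter.tendsto_pow_atTop two_ne_zero)
    simpa using h.neg.div_const 2
  rw [integral_Ioi_of_hasDerivAt_of_tendsto' hd gauss_int'.integrableOn ht]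
  ring

lemma tail_bound (y : ℝ) :
    y * ∫ s in Set.Ioi y, Real.exp (-s ^ 2) ≤ Real.exp (-y ^ 2) / 2 := by
  rw [← tail_first_moment, ← integral_const_mul]
  refine setIntegral_mono_on (gauss_int.const_mul y).integrableOn gauss_int'.integrableOn
    measurableSet_Ioi ?_
  intro x hx
  exact mul_le_mul_of_nonneg_right (le_of_lt hx) (Real.exp_pos _).le

theorem fAux_two_sided_bound :
    ∀ z : ℝ, 0 ≤ z →
      -Real.sqrt (2 / Real.pi) ≤ z - fAux z ∧ z - fAux z ≤ 0 := by
  intro z hz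
  have hs : 0 < Real.sqrt 2 := by positivity
  have hp : 0 < Real.sqrt Real.pi := Real.sqrt_pos.2 Real.pi_pos
  have he : z - fAux z = z * (1 - erf (z / Real.sqrt 2))
      - Real.sqrt (2 / Real.pi) * Real.exp (-z ^ 2 / 2) := by
    rw [fAux]; ring
  rw [he]
  constructor
  · have h1 : 0 ≤ z * (1 - erf (z / Real.sqrt 2)) := by
      rw [one_sub_erf]
      have : 0 ≤ ∫ s in Set.Ioi (z / Real.sqrt 2), Real.exp (-s ^ 2) :=
        integral_nonneg fun s => (Real.exp_pos _).le
      positivity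
    have h2 : Real.exp (-z ^ 2 / 2) ≤ 1 := Real.exp_le_one_iff.2 (by nlinarith [sq_nonneg z])
    nlinarith [Real.sqrt_nonneg (2 / Real.pi)]
  · have hb := tail_bound (z / Real.sqrt 2)
    have hy : -(z / Real.sqrt 2) ^ 2 = -z ^ 2 / 2 := by
      rw [div_pow, Real.sq_sqrt (by norm_num)]; ring
    rw [one_sub_erf, Real.sqrt_div (by norm_num)]
    rw [hy] at hb
    generalize (∫ s in Set.Ioi (z / Real.sqrt 2), Real.exp (-s ^ 2)) = T at *
    have hc : 0 ≤ 2 * Real.sqrt 2 / Real.sqrt Real.pi := by positivity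
    have := mul_le_mul_of_nonneg_left hb hc
    have e1 : 2 * Real.sqrt 2 / Real.sqrt Real.pi * (z / Real.sqrt 2 * T)
        = z * (2 / Real.sqrt Real.pi * T) := by field_simp
    rw [e1] at this
    linarith [show 2 * Real.sqrt 2 / Real.sqrt Real.pi * (Real.exp (-z ^ 2 / 2) / 2)
      = Real.sqrt 2 / Real.sqrt Real.pi * Real.exp (-z ^ 2 / 2) by ring]
end
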